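/- arXiv:1411.3534 — 2 statements merged into one kernel-verified Lean document; each statement's English description precedes it below -/
import Mathlib

section
/- Let m, n, λ be positive integers with m ≤ n and let r ≥ 0. Then, as an identity of rational numbers, f_r(m,n,λ)/r! = Σ_{(a_0,…,a_{m−1}) ∈ ℕ^m, a_0+⋯+a_{m−1} = r} [ ∏_{0 ≤ i < j < m} (a_i − a_j + j − i)/(j − i) ] · ∏_{s=0}^{m−1} λ^{(a_s)} · (n−s)^{(a_s)} / a_s!, where the inner factors (a_i − a_j + j − i) are integers (possibly negative) and the sum is over the finitely many m-tuples of natural numbers summing to r. (This is the coefficient of x^r in the paper's evaluation F(m,n,λ;x) = Σ_{a_0,…,a_{m−1}} ∏_{i<j}((a_i−a_j)/(j−i)+1) ∏_s [Γ(λ+a_s)/Γ(λ)]·[Γ(n−s+a_s)/Γ(n−s)]·x^{a_s}/a_s!.) -/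
open Finset

/-- Number of cycles of a permutation, counting fixed points as cycles of length 1. -/
def cyc {r : ℕ} (σ : Equiv.Perm (Fin r)) : ℕ :=
  σ.cycleType.card + (Finset.univ.filter fun x => σ x = x).card

/-- `f_r(m,n,λ) = Σ_{(σ,τ) ∈ S_r × S_r} m^{cyc σ} n^{cyc τ} λ^{cyc((στ)⁻¹)}`,
summed over all pairs; for `r = 0` this sum is `1`. -/
def fSum (r m n lam : ℕ) : ℕ :=
  ∑ σ : Equiv.Perm (Fin r), ∑ τ : Equiv.Perm (Fin r),
    m ^ cyc σ * n ^ cyc τ * lam ^ cyc (σ * τ)⁻¹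

/-!
By `card_filter_comp_eq_self`, `m ^ cyc ρ` counts the `ρ`-invariant colorings with `m` colors, and
the weighted generating function of these colorings is the power sum `p_ρ` in `x_1, …, x_m`. Put
`n = m + α`. Splitting off the point `0` shows that `g ρ = ∑ τ, n ^ cyc τ * m ^ cyc (ρ * τ)`
satisfies a recursion in the number of points. The moments of `p_ρ` against
`∏_{i < j} (x_i - x_j) ^ 2 ∏_i x_i ^ α e^{-x_i} dx_i` satisfy the same recursion: integrate by parts
in the variable that colors `0`. Hence `g ρ` is the normalized moment of `p_ρ`, and
`f_r = ∑ ρ, λ ^ cyc ρ * g ρ` is the moment of `∑ ρ, λ ^ cyc ρ * p_ρ`. In the latter sum the monomial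
of a coloring has as coefficient the product of the rising factorials `λ^{(a_s)}`, where `a_s` are
the sizes of the color classes, because the stabilizer of a coloring is a product of symmetric
groups. By antisymmetry one Vandermonde factor may be replaced by its diagonal term, and then the
moment of a monomial is the determinant of a matrix of factorials, which row operations reduce to a
Vandermonde determinant.
-/

open Equiv MvPolynomial
open Function (update)
open Matrix (vecCons vecTail)

section InvariantColorings

variable {α ι : Type*}

lemma comp_eq_self_iff_sameCycle_le_ker (σ : Perm α) (c : α → ι) :
    c ∘ σ = c ↔ Perm.SameCycle.setoid σ ≤ Setoid.ker c := by
  refine ⟨fun h x y hxy => ?_, fun h => funext fun x => ?_⟩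
  · obtain ⟨n, rfl⟩ := hxy
    have hσ : DomMulAct.mk σ ∈ MulAction.stabilizer (Perm α)ᵈᵐᵃ c :=
      DomMulAct.mem_stabilizer_iff.2 h
    exact (congrFun (DomMulAct.mem_stabilizer_iff.1 (zpow_mem hσ n)) x).symm
  · exact h (Perm.sameCycle_apply_left.2 (.refl σ x))

variable [DecidableEq α]

/-- A complete invariant of the orbits of `σ`: a fixed point labels its own orbit, and any other
orbit is labelled by the cycle factor of `σ` supported on it. -/
def orbitLabel [Fintype α] (σ : Perm α) (x : α) : Perm α ⊕ α :=
  if σ x = x then .inr x else .inl (σ.cycleOf x)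

variable [Fintype α]

lemma orbitLabel_eq_orbitLabel_iff (σ : Perm α) (x y : α) :
    orbitLabel σ x = orbitLabel σ y ↔ σ.SameCycle x y := by
  by_cases hx : σ x = x <;> by_cases hy : σ y = y
  · simp only [orbitLabel, hx, hy, if_true, Sum.inr.injEq]
    exact ⟨fun h => h ▸ .refl σ x, fun h => h.eq_of_left hx⟩
  · simp only [orbitLabel, hx, hy, if_true, if_false, reduceCtorEq, false_iff]
    exact fun h => hy (h.eq_of_left hx ▸ hx)
  · simp only [orbitLabel, hx, hy, if_true, if_false, reduceCtorEq, false_iff]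
    exact fun h => hx (h.eq_of_right hy ▸ hy)
  · simp only [orbitLabel, hx, hy, if_false, Sum.inl.injEq]
    exact (Perm.sameCycle_iff_cycleOf_eq_of_mem_support (Perm.mem_support.2 hx)
      (Perm.mem_support.2 hy)).symm

lemma image_orbitLabel (σ : Perm α) :
    univ.image (orbitLabel σ) = σ.cycleFactorsFinset.disjSum {x | σ x = x} := by
  ext (g | x)
  · simp only [mem_image, mem_univ, true_and, orbitLabel, inl_mem_disjSum]
    constructor
    · rintro ⟨x, hx⟩
      split_ifs at hx with hfix
      exact Sum.inl.inj hx ▸ Perm.cycleOf_mem_cycleFactorsFinset_iff.2 (Perm.mem_support.2 hfix)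
    · intro hg
      obtain ⟨x, hx⟩ := (Perm.mem_cycleFactorsFinset_iff.1 hg).1.nonempty_support
      have hmove : σ x ≠ x :=
        Perm.mem_support.1 (Perm.mem_cycleFactorsFinset_support_le hg hx)
      exact ⟨x, by rw [if_neg hmove, Perm.cycle_is_cycleOf hx hg]⟩
  · simp only [mem_image, mem_univ, true_and, orbitLabel, inr_mem_disjSum, mem_filter]
    grind

lemma card_quotient_sameCycle (σ : Perm α) :
    Nat.card (Quotient (Perm.SameCycle.setoid σ)) = σ.cycleType.card + #{x | σ x = x} := by
  have hker : Perm.SameCycle.setoid σ = Setoid.ker (orbitLabel σ) :=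
    Setoid.ext fun x y => (orbitLabel_eq_orbitLabel_iff σ x y).symm
  rw [hker, Nat.card_congr (Setoid.quotientKerEquivRange _), ← Set.image_univ, ← coe_univ,
    ← coe_image, image_orbitLabel, Nat.card_coe_set_eq, Set.ncard_coe_finset, card_disjSum,
    Perm.cycleType_def, Multiset.card_map, card_val]

end InvariantColorings

section Decompose

variable {r : ℕ} {ι : Type*}

lemma card_filter_comp_eq_self [Fintype ι] [DecidableEq ι] (σ : Perm (Fin r)) :
    #{c : Fin r → ι | c ∘ σ = c} = Fintype.card ι ^ cyc σ := by
  rw [← Fintype.card_subtype, ← Nat.card_eq_fintype_card,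
    Nat.card_congr ((Equiv.subtypeEquivRight (comp_eq_self_iff_sameCycle_le_ker σ)).trans
      (Setoid.liftEquiv _)), Nat.card_fun, card_quotient_sameCycle, Nat.card_eq_fintype_card]
  rfl

lemma cyc_inv (σ : Perm (Fin r)) : cyc σ⁻¹ = cyc σ := by
  simp only [cyc, Perm.cycleType_inv, Perm.inv_eq_iff_eq]
  simp only [eq_comm]

lemma comp_decomposeFin_symm_eq_self_iff (c : Fin (r + 1) → ι) (y : Fin (r + 1))
    (e : Perm (Fin r)) :
    c ∘ Perm.decomposeFin.symm (y, e) = c ↔ vecTail c ∘ e = vecTail c ∧ c y = c 0 := by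
  have hswap (hy : c y = c 0) (z : Fin (r + 1)) : c (swap 0 y z) = c z := by
    rw [swap_apply_def]
    split_ifs with hz hz <;> simp [hz, hy]
  simp only [funext_iff, Fin.forall_fin_succ, Function.comp_apply,
    Perm.decomposeFin_symm_apply_zero, Perm.decomposeFin_symm_apply_succ, vecTail]
  rw [and_comm]
  exact and_congr_left fun hy => by simp only [hswap hy]

lemma sum_vecCons {M : Type*} [AddCommMonoid M] [Fintype ι] (g : (Fin (r + 1) → ι) → M) :
    ∑ c, g c = ∑ x, ∑ d, g (vecCons x d) := by
  rw [← (Fin.consEquiv fun _ => ι).sum_comp, Fintype.sum_prod_type]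
  rfl

lemma sum_sum_filter_vecCons_comp_decomposeFin_symm {M : Type*} [AddCommMonoid M] [Fintype ι]
    [DecidableEq ι] (g : (Fin r → ι) → M) (y : Fin (r + 1)) (e : Perm (Fin r)) :
    ∑ x, ∑ d with vecCons x d ∘ Perm.decomposeFin.symm (y, e) = vecCons x d, g d =
      (if y = 0 then Fintype.card ι else 1) • ∑ d with d ∘ e = d, g d := by
  simp only [comp_decomposeFin_symm_eq_self_iff, Matrix.tail_cons, Matrix.cons_val_zero,
    ← filter_filter]
  cases y using Fin.cases with
  | zero => simp
  | succ k =>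
    simp only [Matrix.cons_val_succ, Fin.succ_ne_zero, if_false, one_smul]
    exact sum_fiberwise _ (fun d : Fin r → ι => d k) g

lemma cyc_decomposeFin_symm (y : Fin (r + 1)) (e : Perm (Fin r)) :
    cyc (Perm.decomposeFin.symm (y, e)) = cyc e + if y = 0 then 1 else 0 := by
  -- Compare the numbers of invariant two-colorings.
  apply Nat.pow_right_injective le_rfl
  have hcount := sum_sum_filter_vecCons_comp_decomposeFin_symm (ι := Fin 2) (fun _ => 1) y e
  simp only [sum_filter] at hcount
  rw [← sum_vecCons fun c => if c ∘ Perm.decomposeFin.symm (y, e) = c then 1 else 0] at hcount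
  simp only [← sum_filter, ← card_eq_sum_ones, card_filter_comp_eq_self, Fintype.card_fin]
    at hcount
  simp only [hcount, smul_eq_mul, pow_add]
  split_ifs <;> ring

lemma pow_cyc_decomposeFin_symm {M : Type*} [CommMonoid M] (k : M) (y : Fin (r + 1))
    (e : Perm (Fin r)) :
    k ^ cyc (Perm.decomposeFin.symm (y, e)) = (if y = 0 then k else 1) * k ^ cyc e := by
  rw [cyc_decomposeFin_symm, pow_add, mul_comm]
  split_ifs <;> simp

lemma decomposeFin_symm_mul_decomposeFin_symm_zero (y : Fin (r + 1)) (e e' : Perm (Fin r)) :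
    Perm.decomposeFin.symm (y, e) * Perm.decomposeFin.symm (0, e') =
      Perm.decomposeFin.symm (y, e * e') := by
  ext1 z
  cases z using Fin.cases <;> simp

lemma decomposeFin_symm_eq_swap_mul (y : Fin (r + 1)) (e : Perm (Fin r)) :
    Perm.decomposeFin.symm (y, e) = swap 0 y * Perm.decomposeFin.symm (0, e) := by
  rw [← Perm.decomposeFin_symm_of_one, decomposeFin_symm_mul_decomposeFin_symm_zero, one_mul]

end Decompose

section CycleConvolution

variable {r : ℕ}

/-- The convolution of the class functions `τ ↦ n ^ cyc τ` and `σ ↦ m ^ cyc σ` on the symmetric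
group, evaluated at `ρ`; the sum runs over the inverse of the first factor. -/
def cycConvolution (m n : ℕ) (ρ : Perm (Fin r)) : ℕ :=
  ∑ τ, n ^ cyc τ * m ^ cyc (ρ * τ)

lemma cycConvolution_succ (m n : ℕ) (ρ : Perm (Fin (r + 1))) :
    cycConvolution m n ρ = ∑ y, (if y = 0 then n else 1) *
      ((if (Perm.decomposeFin (ρ * swap 0 y)).1 = 0 then m else 1) *
        cycConvolution m n (Perm.decomposeFin (ρ * swap 0 y)).2) := by
  rw [cycConvolution, ← Perm.decomposeFin.symm.sum_comp, Fintype.sum_prod_type]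
  refine sum_congr rfl fun y _ => ?_
  obtain ⟨⟨y', e'⟩, hκ⟩ := Perm.decomposeFin.symm.surjective (ρ * swap 0 y)
  simp only [← hκ, apply_symm_apply, cycConvolution, mul_sum]
  refine sum_congr rfl fun e _ => ?_
  have hmul : ρ * Perm.decomposeFin.symm (y, e) = Perm.decomposeFin.symm (y', e' * e) := by
    rw [decomposeFin_symm_eq_swap_mul, ← mul_assoc, ← hκ,
      decomposeFin_symm_mul_decomposeFin_symm_zero]
  rw [hmul, pow_cyc_decomposeFin_symm, pow_cyc_decomposeFin_symm]
  ring

lemma fSum_eq_sum_cycConvolution (r m n lam : ℕ) :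
    fSum r m n lam = ∑ ρ : Perm (Fin r), lam ^ cyc ρ * cycConvolution m n ρ := by
  simp only [fSum, cycConvolution, mul_sum]
  rw [sum_comm]
  conv_rhs => rw [sum_comm]
  refine Fintype.sum_equiv (Equiv.inv _) _ _ fun τ => Fintype.sum_equiv (Equiv.mulRight τ) _ _
    fun σ => ?_
  simp only [Equiv.inv_apply, coe_mulRight, cyc_inv, mul_inv_cancel_right]
  ring

end CycleConvolution

section Stabilizer

variable {ι : Type*} [Fintype ι] [DecidableEq ι]

lemma prod_ascFactorial_card_fiber_succ {r : ℕ} (lam : ℕ) (c : Fin (r + 1) → ι) :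
    ∏ s, lam.ascFactorial #{z | c z = s} =
      (lam + #{k | vecTail c k = c 0}) * ∏ s, lam.ascFactorial #{k | vecTail c k = s} := by
  have hcard (s : ι) : #{z | c z = s} = #{k | vecTail c k = s} + if c 0 = s then 1 else 0 := by
    rw [card_filter, card_filter, Fin.sum_univ_succ, add_comm]
    rfl
  rw [← mul_prod_erase _ _ (mem_univ (c 0)),
    ← mul_prod_erase _ (fun s => lam.ascFactorial #{k | vecTail c k = s}) (mem_univ (c 0)),
    ← mul_assoc, hcard, if_pos rfl, Nat.ascFactorial_succ]
  congr 1
  refine prod_congr rfl fun s hs => ?_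
  rw [hcard, if_neg (ne_of_mem_erase hs).symm, add_zero]

lemma sum_pow_cyc_of_comp_eq_self (lam : ℕ) {r : ℕ} (c : Fin r → ι) :
    ∑ ρ with c ∘ (ρ : Perm (Fin r)) = c, lam ^ cyc ρ = ∏ s, lam.ascFactorial #{z | c z = s} := by
  induction r with
  | zero => simp [cyc, Subsingleton.elim _ c]
  | succ r ih =>
    rw [prod_ascFactorial_card_fiber_succ, ← ih, sum_filter, ← Perm.decomposeFin.symm.sum_comp,
      Fintype.sum_prod_type]
    simp only [comp_decomposeFin_symm_eq_self_iff, and_comm, pow_cyc_decomposeFin_symm, sum_filter,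
      ite_and]
    rw [Fin.sum_univ_succ, add_mul, card_filter, sum_mul]
    congr 1
    · simp [mul_sum]
    · refine sum_congr rfl fun k _ => ?_
      change (∑ e, if vecTail c k = c 0 then _ else _) = _
      by_cases hk : vecTail c k = c 0 <;> simp [hk]

end Stabilizer

section PowerSums

lemma derivation_prod {R A M κ : Type*} [CommSemiring R] [CommSemiring A] [AddCommMonoid M]
    [Algebra R A] [Module A M] [Module R M] [DecidableEq κ] (D : Derivation R A M) (s : Finset κ)
    (f : κ → A) : D (∏ a ∈ s, f a) = ∑ a ∈ s, (∏ b ∈ s.erase a, f b) • D (f a) := by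
  induction s using Finset.induction_on with
  | empty => simp
  | insert a s ha ih =>
    rw [prod_insert ha, D.leibniz, ih, sum_insert ha, erase_insert ha, smul_sum, add_comm]
    congr 1
    refine sum_congr rfl fun b hb => ?_
    rw [erase_insert_of_ne (ne_of_mem_of_not_mem hb ha).symm,
      prod_insert fun h => ha (mem_of_mem_erase h), mul_smul]

lemma X_mul_pderiv_prod_X {ι κ R : Type*} [CommSemiring R] [DecidableEq ι] [Fintype κ] (d : κ → ι)
    (i : ι) :
    X i * pderiv i (∏ z, (X (d z) : MvPolynomial ι R)) =
      ∑ k, if d k = i then ∏ z, X (d z) else 0 := by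
  classical
  rw [derivation_prod, mul_sum]
  refine sum_congr rfl fun k _ => ?_
  split_ifs with hk
  · rw [← prod_erase_mul _ _ (mem_univ k), hk, pderiv_X_self, smul_eq_mul, mul_one, mul_comm]
  · rw [pderiv_X_of_ne hk, smul_zero, mul_zero]

lemma X_mul_prod_X_update {ι κ R : Type*} [CommSemiring R] [Fintype κ] [DecidableEq κ]
    (d : κ → ι) (k : κ) (j : ι) :
    X (d k) * ∏ z, (X (update d k j z) : MvPolynomial ι R) = X j * ∏ z, X (d z) := by
  have hcomp : (fun z => (X (update d k j z) : MvPolynomial ι R)) =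
      update (fun z => X (d z)) k (X j) := Function.comp_update X d k j
  rw [hcomp, prod_update_of_mem (mem_univ k), mul_left_comm, ← mul_prod_erase _ _ (mem_univ k),
    sdiff_singleton_eq_erase]

variable {ι R : Type*} [Fintype ι] [DecidableEq ι] [CommSemiring R] {r : ℕ}

variable (ι R) in
/-- The power sum symmetric polynomial indexed by the cycle type of `ρ`, as the generating function
of the `ρ`-invariant colorings. -/
noncomputable def permPowerSum (ρ : Perm (Fin r)) : MvPolynomial ι R :=
  ∑ c : Fin r → ι with c ∘ ρ = c, ∏ z, X (c z)

variable (R) in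
/-- The generating function of the `ρ`-invariant colorings for which `0` has color `i`, where the
color of `0` is left out of the weight. -/
noncomputable def pointedPowerSum (ρ : Perm (Fin (r + 1))) (i : ι) : MvPolynomial ι R :=
  ∑ d : Fin r → ι with vecCons i d ∘ ρ = vecCons i d, ∏ z, X (d z)

variable (R) in
/-- The generating function of the colorings `d` that are `ρ`-invariant except that the color turns
from `j` to `i` after `a` and back from `i` to `j` at `0`: the point `0`, left out of the weight,
has color `i` as an image under `ρ` and color `j` as an argument of `ρ`. -/
noncomputable def bicolorPowerSum (ρ : Perm (Fin (r + 1))) (i j : ι) (a : Fin (r + 1)) :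
    MvPolynomial ι R :=
  ∑ d : Fin r → ι with vecCons j d a = j ∧ vecCons i d ∘ ρ = update (vecCons j d) a i,
    ∏ z, X (d z)

lemma permPowerSum_isSymmetric (ρ : Perm (Fin r)) : (permPowerSum ι R ρ).IsSymmetric := by
  intro π
  rw [permPowerSum, map_sum]
  refine sum_equiv (Equiv.arrowCongr (.refl _) π) (fun c => ?_) fun c _ => ?_
  · simp [funext_iff]
  · simp

lemma permPowerSum_eq_sum_X_mul_pointedPowerSum (ρ : Perm (Fin (r + 1))) :
    permPowerSum ι R ρ = ∑ i, X i * pointedPowerSum R ρ i := by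
  simp only [permPowerSum, pointedPowerSum, sum_filter, mul_sum, mul_ite, mul_zero]
  rw [sum_vecCons]
  simp only [Fin.prod_univ_succ, Matrix.cons_val_zero, Matrix.cons_val_succ]

lemma sum_pointedPowerSum (ρ : Perm (Fin (r + 1))) :
    ∑ i : ι, pointedPowerSum R ρ i =
      (if (Perm.decomposeFin ρ).1 = 0 then Fintype.card ι else 1) •
        permPowerSum ι R (Perm.decomposeFin ρ).2 := by
  obtain ⟨⟨y, e⟩, rfl⟩ := Perm.decomposeFin.symm.surjective ρ
  rw [apply_symm_apply]
  exact sum_sum_filter_vecCons_comp_decomposeFin_symm _ y e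

lemma bicolorPowerSum_zero (ρ : Perm (Fin (r + 1))) (i j : ι) :
    bicolorPowerSum R ρ i j 0 = pointedPowerSum R ρ i := by
  have hupdate (d : Fin r → ι) : update (vecCons j d) 0 i = vecCons i d := Fin.update_cons_zero ..
  simp only [bicolorPowerSum, pointedPowerSum, Matrix.cons_val_zero, true_and, hupdate]

lemma bicolorPowerSum_of_apply_eq_zero {ρ : Perm (Fin (r + 1))} {z : Fin (r + 1)} (hz : ρ z = 0)
    (i j : ι) : bicolorPowerSum R ρ i j z = pointedPowerSum R ρ j := by
  rw [bicolorPowerSum, pointedPowerSum]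
  congr 1
  ext d
  have hne (y : Fin (r + 1)) (hy : y ≠ z) : ρ y ≠ 0 := fun h => hy (ρ.injective (h.trans hz.symm))
  have hcons (y : Fin (r + 1)) (hy : y ≠ z) : vecCons i d (ρ y) = vecCons j d (ρ y) := by
    obtain ⟨k, hk⟩ := Fin.exists_succ_eq_of_ne_zero (hne y hy)
    rw [← hk, Matrix.cons_val_succ, Matrix.cons_val_succ]
  simp only [mem_filter, mem_univ, true_and, funext_iff, Function.comp_apply]
  constructor
  · rintro ⟨hj, h⟩ y
    by_cases hy : y = z
    · rw [hy, hz, hj, Matrix.cons_val_zero]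
    · rw [← hcons y hy, h y, Function.update_of_ne hy]
  · intro h
    refine ⟨by rw [← h z, hz, Matrix.cons_val_zero], fun y => ?_⟩
    by_cases hy : y = z
    · rw [hy, hz, Function.update_self, Matrix.cons_val_zero]
    · rw [hcons y hy, h y, Function.update_of_ne hy]

lemma X_mul_bicolorPowerSum_apply {ρ : Perm (Fin (r + 1))} {z : Fin (r + 1)} (hz : ρ z ≠ 0)
    (i j : ι) :
    X i * bicolorPowerSum R ρ i j (ρ z) = X j * bicolorPowerSum R ρ i j z := by
  obtain ⟨k, hk⟩ := Fin.exists_succ_eq_of_ne_zero hz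
  have hcons (l l' : ι) (d : Fin r → ι) : vecCons l (update d k l') =
      update (vecCons l d) k.succ l' := Fin.cons_update ..
  have hs (l : ι) (d : Fin r → ι) : vecCons l d k.succ = d k := rfl
  have hρ (y : Fin (r + 1)) : ρ y = k.succ ↔ y = z := by rw [hk, ρ.injective.eq_iff]
  simp only [bicolorPowerSum, mul_sum, ← hk]
  have hcolor {d : Fin r → ι} (hd : d ∈ ({d | vecCons j d z = j ∧
      vecCons i d ∘ ρ = update (vecCons j d) z i} : Finset (Fin r → ι))) : d k = i := by
    simpa [← hk] using congrFun (mem_filter.1 hd).2.2 z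
  symm
  refine sum_nbij' (fun d => update d k j) (fun d => update d k i) ?_ ?_ ?_ ?_ ?_
  · intro d hd
    simp only [mem_filter, mem_univ, true_and, funext_iff, Function.comp_apply, hcons,
      Function.update_apply, hρ] at hd ⊢
    grind
  · intro d hd
    simp only [mem_filter, mem_univ, true_and, funext_iff, Function.comp_apply, hcons,
      Function.update_apply, hρ] at hd ⊢
    grind
  · intro d hd
    have hdk : d k = i := hcolor hd
    rw [Function.update_idem, ← hdk, Function.update_eq_self]
  · intro d hd
    have hdk : d k = j := (mem_filter.1 hd).2.1
    rw [Function.update_idem, ← hdk, Function.update_eq_self]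
  · intro d hd
    rw [← hcolor hd, X_mul_prod_X_update]

lemma X_sub_X_mul_sum_bicolorPowerSum {R : Type*} [CommRing R] (ρ : Perm (Fin (r + 1))) (i j : ι) :
    (X i - X j) * ∑ a, bicolorPowerSum R ρ i j a =
      X i * pointedPowerSum R ρ i - X j * pointedPowerSum R ρ j := by
  have hstep (z : Fin (r + 1)) :
      X i * bicolorPowerSum R ρ i j (ρ z) - X j * bicolorPowerSum R ρ i j z =
        if ρ z = 0 then X i * pointedPowerSum R ρ i - X j * pointedPowerSum R ρ j else 0 := by
    split_ifs with hz
    · rw [bicolorPowerSum_of_apply_eq_zero hz, hz, bicolorPowerSum_zero]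
    · rw [X_mul_bicolorPowerSum_apply hz, sub_self]
  calc (X i - X j) * ∑ a, bicolorPowerSum R ρ i j a
      = ∑ z, (X i * bicolorPowerSum R ρ i j (ρ z) - X j * bicolorPowerSum R ρ i j z) := by
        rw [sum_sub_distrib, Equiv.sum_comp ρ fun z => X i * bicolorPowerSum R ρ i j z, sub_mul,
          mul_sum, mul_sum]
    _ = X i * pointedPowerSum R ρ i - X j * pointedPowerSum R ρ j := by
        simp only [hstep]
        rw [Equiv.sum_comp ρ fun z => if z = 0 then _ else 0, sum_ite_eq', if_pos (mem_univ 0)]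

lemma sum_bicolorPowerSum_succ (ρ : Perm (Fin (r + 1))) (i : ι) (k : Fin r) :
    ∑ j, bicolorPowerSum R ρ i j k.succ = pointedPowerSum R (ρ * swap 0 k.succ) i := by
  have hswap (d : Fin r → ι) :
      vecCons i d ∘ swap 0 k.succ = update (vecCons (d k) d) k.succ i := by
    rw [comp_swap_eq_update, Function.update_comm (Fin.succ_ne_zero k)]
    exact congrArg (update · _ _) (Fin.update_cons_zero ..)
  simp only [bicolorPowerSum, pointedPowerSum, sum_filter]
  rw [sum_comm]
  refine sum_congr rfl fun d _ => ?_
  simp only [Matrix.cons_val_succ, ite_and, sum_ite_eq, mem_univ, if_true, ← hswap]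
  refine if_congr ?_ rfl rfl
  rw [Perm.coe_mul, ← Function.comp_assoc, ← eq_comp_symm (swap 0 k.succ), symm_swap]

lemma pointedPowerSum_add_X_mul_pderiv (ρ : Perm (Fin (r + 1))) (i : ι) :
    pointedPowerSum R ρ i + X i * pderiv i (pointedPowerSum R ρ i) =
      ∑ a, bicolorPowerSum R ρ i i a := by
  rw [Fin.sum_univ_succ, bicolorPowerSum_zero]
  congr 1
  simp only [pointedPowerSum, bicolorPowerSum, map_sum, mul_sum, X_mul_pderiv_prod_X]
  rw [sum_comm]
  refine sum_congr rfl fun k _ => ?_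
  rw [← sum_filter, filter_filter]
  refine sum_congr (filter_congr fun d _ => ?_) fun _ _ => rfl
  rw [and_comm, Matrix.cons_val_succ]
  exact and_congr_right fun hk => by rw [Function.update_eq_self_iff.2 hk.symm]

lemma sum_sum_bicolorPowerSum (ρ : Perm (Fin (r + 1))) (i : ι) :
    ∑ j, ∑ a, bicolorPowerSum R ρ i j a = Fintype.card ι • pointedPowerSum R ρ i +
      ∑ k : Fin r, pointedPowerSum R (ρ * swap 0 k.succ) i := by
  simp only [Fin.sum_univ_succ, bicolorPowerSum_zero, sum_add_distrib, sum_const, card_univ]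
  rw [sum_comm]
  simp only [sum_bicolorPowerSum_succ]

end PowerSums

section LaguerreFunctional

variable {ι R : Type*} [Fintype ι] [CommSemiring R]

lemma prod_X_pow_eq_monomial_one (a : ι → ℕ) :
    ∏ i, X i ^ a i = monomial (Finsupp.equivFunOnFinite.symm a) (1 : R) := by
  rw [monomial_eq, Finsupp.prod_fintype _ _ (by simp)]
  simp

variable (ι R) in
/-- The linear functional `x ^ b ↦ ∏ i, (b i + α)!`, which is integration against the product of
the Laguerre weights `x ^ α * exp (-x)` on the positive half-lines. -/
noncomputable def laguerreFunctional (α : ℕ) : MvPolynomial ι R →ₗ[R] R :=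
  (basisMonomials ι R).constr R fun b => ∏ i, ((b i + α).factorial : R)

lemma laguerreFunctional_monomial (α : ℕ) (b : ι →₀ ℕ) (q : R) :
    laguerreFunctional ι R α (monomial b q) = q * ∏ i, ((b i + α).factorial : R) := by
  have hbasis : monomial b q = q • basisMonomials ι R b := by simp [smul_monomial]
  rw [hbasis, map_smul, laguerreFunctional, Module.Basis.constr_basis, smul_eq_mul]

lemma laguerreFunctional_prod_X_pow (α : ℕ) (b : ι → ℕ) :
    laguerreFunctional ι R α (∏ i, X i ^ b i) = ∏ i, ((b i + α).factorial : R) := by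
  rw [prod_X_pow_eq_monomial_one, laguerreFunctional_monomial, one_mul,
    Finsupp.coe_equivFunOnFinite_symm]

/-- Integration by parts. -/
lemma laguerreFunctional_X_mul (α : ℕ) (i : ι) (p : MvPolynomial ι R) :
    laguerreFunctional ι R α (X i * p) =
      α * laguerreFunctional ι R α p + laguerreFunctional ι R α (p + X i * pderiv i p) := by
  classical
  induction p using MvPolynomial.induction_on' with
  | monomial b q =>
    have hfactorial : ∏ x, (((Finsupp.single i 1 + b : ι →₀ ℕ) x + α).factorial : R) =
        (α + 1 + b i) * ∏ x, ((b x + α).factorial : R) := by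
      rw [← mul_prod_erase _ _ (mem_univ i),
        ← mul_prod_erase _ (fun x => ((b x + α).factorial : R)) (mem_univ i), ← mul_assoc]
      congr 1
      · simp only [Finsupp.add_apply, Finsupp.single_eq_same, add_comm 1, add_right_comm _ 1,
          Nat.factorial_succ]
        push_cast
        ring
      · refine prod_congr rfl fun x hx => ?_
        rw [Finsupp.add_apply, Finsupp.single_eq_of_ne (ne_of_mem_erase hx), zero_add]
    rw [X_mul_pderiv_monomial, map_add, map_nsmul, X, monomial_mul, one_mul,
      laguerreFunctional_monomial, laguerreFunctional_monomial, hfactorial, nsmul_eq_mul]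
    ring
  | add p q hp hq =>
    simp only [mul_add, map_add, hp, hq]
    ring

lemma laguerreFunctional_rename (α : ℕ) (π : Perm ι) (p : MvPolynomial ι R) :
    laguerreFunctional ι R α (rename π p) = laguerreFunctional ι R α p := by
  induction p using MvPolynomial.induction_on' with
  | monomial b q =>
    rw [rename_monomial, laguerreFunctional_monomial, laguerreFunctional_monomial,
      ← Equiv.prod_comp π]
    simp only [Finsupp.mapDomain_apply π.injective]
  | add p q hp hq => simp only [map_add, hp, hq]

end LaguerreFunctional

section LoopEquation

variable {ι R : Type*} [Fintype ι] [CommRing R] {r : ℕ}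

variable (ι R) in
/-- The product of `X i - X j` over all ordered pairs of distinct indices, which is the discriminant
of `∏ i, (T - X i)` up to sign. -/
noncomputable def prodOffDiag : MvPolynomial ι R :=
  ∏ p ∈ univ.offDiag, (X p.1 - X p.2)

lemma sum_mul_pderiv_prodOffDiag (w : ι → MvPolynomial ι R) (q : ι → ι → MvPolynomial ι R)
    (hq : ∀ i j, (X i - X j) * q i j = w i - w j) :
    ∑ i, w i * pderiv i (prodOffDiag ι R) = (∑ p ∈ univ.offDiag, q p.1 p.2) * prodOffDiag ι R := by
  classical
  have hpderiv (p : ι × ι) :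
      ∑ i, w i * pderiv i (X p.1 - X p.2 : MvPolynomial ι R) = w p.1 - w p.2 := by
    simp [pderiv_X, Pi.single_apply, mul_sub]
  simp only [prodOffDiag, derivation_prod, mul_sum, smul_eq_mul, sum_mul]
  rw [sum_comm]
  refine sum_congr rfl fun p hp => ?_
  simp only [mul_left_comm (w _)]
  rw [← mul_sum, hpderiv, ← hq, ← prod_erase_mul _ _ hp]
  ring

variable [DecidableEq ι]

lemma sum_pointedPowerSum_mul_prodOffDiag_add_X_mul_pderiv (ρ : Perm (Fin (r + 1))) :
    ∑ i, (pointedPowerSum R ρ i * prodOffDiag ι R +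
        X i * pderiv i (pointedPowerSum R ρ i * prodOffDiag ι R)) =
      (∑ i, (Fintype.card ι • pointedPowerSum R ρ i +
        ∑ k : Fin r, pointedPowerSum R (ρ * swap 0 k.succ) i)) * prodOffDiag ι R := by
  have hoffDiag := sum_mul_pderiv_prodOffDiag _ _
    (X_sub_X_mul_sum_bicolorPowerSum (ι := ι) (R := R) ρ)
  calc _ = (∑ i, (pointedPowerSum R ρ i + X i * pderiv i (pointedPowerSum R ρ i))) *
            prodOffDiag ι R + ∑ i, X i * pointedPowerSum R ρ i * pderiv i (prodOffDiag ι R) := by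
        rw [sum_mul, ← sum_add_distrib]
        refine sum_congr rfl fun i _ => ?_
        rw [Derivation.leibniz, smul_eq_mul, smul_eq_mul]
        ring
    _ = (∑ i, ∑ j, ∑ a, bicolorPowerSum R ρ i j a) * prodOffDiag ι R := by
        rw [hoffDiag, ← add_mul, ← Fintype.sum_prod_type', ← univ_product_univ,
          ← diag_union_offDiag, sum_union (disjoint_diag_offDiag _), sum_diag]
        simp only [pointedPowerSum_add_X_mul_pderiv]
    _ = _ := by simp only [sum_sum_bicolorPowerSum]

/-- The loop equation of the Laguerre ensemble. -/
lemma laguerreFunctional_permPowerSum_succ (α : ℕ) (ρ : Perm (Fin (r + 1))) :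
    laguerreFunctional ι R α (permPowerSum ι R ρ * prodOffDiag ι R) =
      ∑ y, (if y = 0 then Fintype.card ι + α else 1 : ℕ) *
        ((if (Perm.decomposeFin (ρ * swap 0 y)).1 = 0 then Fintype.card ι else 1 : ℕ) *
          laguerreFunctional ι R α
            (permPowerSum ι R (Perm.decomposeFin (ρ * swap 0 y)).2 * prodOffDiag ι R)) := by
  have hpointed (κ : Perm (Fin (r + 1))) :
      ((if (Perm.decomposeFin κ).1 = 0 then Fintype.card ι else 1 : ℕ) : R) *
        laguerreFunctional ι R α (permPowerSum ι R (Perm.decomposeFin κ).2 * prodOffDiag ι R) =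
      laguerreFunctional ι R α ((∑ i, pointedPowerSum R κ i) * prodOffDiag ι R) := by
    rw [sum_pointedPowerSum, smul_mul_assoc, map_nsmul, nsmul_eq_mul]
  simp only [hpointed]
  have hparts : laguerreFunctional ι R α (permPowerSum ι R ρ * prodOffDiag ι R) =
      α * laguerreFunctional ι R α ((∑ i, pointedPowerSum R ρ i) * prodOffDiag ι R) +
      laguerreFunctional ι R α (∑ i, (pointedPowerSum R ρ i * prodOffDiag ι R +
        X i * pderiv i (pointedPowerSum R ρ i * prodOffDiag ι R))) := by
    rw [permPowerSum_eq_sum_X_mul_pointedPowerSum, sum_mul, sum_mul, map_sum, map_sum, map_sum,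
      mul_sum, ← sum_add_distrib]
    refine sum_congr rfl fun i _ => ?_
    rw [mul_assoc, laguerreFunctional_X_mul]
  rw [hparts, sum_pointedPowerSum_mul_prodOffDiag_add_X_mul_pderiv, sum_add_distrib, sum_comm,
    ← smul_sum, add_mul, map_add, smul_mul_assoc, map_nsmul, nsmul_eq_mul,
    sum_mul (univ : Finset (Fin r)), map_sum _ _ (univ : Finset (Fin r)), Fin.sum_univ_succ,
    if_pos rfl, swap_self, ← Perm.one_def, mul_one]
  simp only [Fin.succ_ne_zero, if_false, Nat.cast_one, one_mul]
  rw [← add_assoc, ← add_mul, add_comm (α : R), Nat.cast_add]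

theorem laguerreFunctional_permPowerSum_mul_prodOffDiag (α : ℕ) (ρ : Perm (Fin r)) :
    laguerreFunctional ι R α (permPowerSum ι R ρ * prodOffDiag ι R) =
      cycConvolution (Fintype.card ι) (Fintype.card ι + α) ρ *
        laguerreFunctional ι R α (prodOffDiag ι R) := by
  induction r with
  | zero => simp [Subsingleton.elim ρ 1, permPowerSum, cycConvolution, cyc]
  | succ r ih =>
    rw [laguerreFunctional_permPowerSum_succ, cycConvolution_succ, Nat.cast_sum, sum_mul]
    refine sum_congr rfl fun y _ => ?_
    rw [ih]
    push_cast
    ring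

end LoopEquation

section ContentSums

variable {ι κ : Type*} [Fintype ι] [DecidableEq ι] [Fintype κ]

lemma prod_comp_eq_prod_pow_card_fiber {M : Type*} [CommMonoid M] (f : ι → M) (c : κ → ι) :
    ∏ z, f (c z) = ∏ s, f s ^ #{z | c z = s} := by
  simp only [← prod_const]
  exact (prod_fiberwise' univ c f).symm

lemma sum_apply_card_fiber {M : Type*} [AddCommMonoid M] (r : ℕ) (g : (ι → ℕ) → M) :
    ∑ c : Fin r → ι, g (fun s => #{z | c z = s}) =
      ∑ a ∈ univ.piAntidiag r, Nat.multinomial univ a • g a := by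
  -- Apply the linear map `x ^ a ↦ g a` to the two expansions of `(∑ i, X i) ^ r`.
  let L : MvPolynomial ι ℕ →ₗ[ℕ] M := (basisMonomials ι ℕ).constr ℕ fun b => g b
  have hL (a : ι → ℕ) : L (∏ i, X i ^ a i) = g a := by
    have hbasis := (basisMonomials ι ℕ).constr_basis ℕ (fun b => g b)
      (Finsupp.equivFunOnFinite.symm a)
    simpa only [coe_basisMonomials, ← prod_X_pow_eq_monomial_one,
      Finsupp.coe_equivFunOnFinite_symm] using hbasis
  have hpow := congrArg L (Fintype.sum_pow (X : ι → MvPolynomial ι ℕ) r)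
  rw [sum_pow_eq_sum_piAntidiag, map_sum, map_sum] at hpow
  simpa only [prod_comp_eq_prod_pow_card_fiber, ← nsmul_eq_mul, map_nsmul, hL] using hpow.symm

lemma sum_pow_cyc_smul_permPowerSum {R : Type*} [CommSemiring R] (lam r : ℕ) :
    ∑ ρ : Perm (Fin r), lam ^ cyc ρ • permPowerSum ι R ρ =
      ∑ a ∈ univ.piAntidiag r,
        Nat.multinomial univ a • (∏ s, lam.ascFactorial (a s)) • ∏ s, X s ^ a s := by
  simp only [permPowerSum, smul_sum, sum_filter, smul_ite, smul_zero]
  rw [sum_comm, ← sum_apply_card_fiber]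
  refine sum_congr rfl fun c _ => ?_
  rw [← sum_filter, ← sum_smul, sum_pow_cyc_of_comp_eq_self, prod_comp_eq_prod_pow_card_fiber X]

end ContentSums

section Vandermonde

variable {R : Type*} [CommRing R] {m : ℕ}

lemma det_projVandermonde_one_left (w : Fin m → R) :
    (Matrix.projVandermonde 1 w).det = ∏ p : Fin m × Fin m with p.1 < p.2, (w p.1 - w p.2) := by
  rw [Matrix.det_projVandermonde, prod_filter, Fintype.prod_prod_type]
  simp [← prod_filter, filter_lt_eq_Ioi]

lemma det_ascFactorial_rev [IsDomain R] (b : Fin m → ℕ) :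
    (Matrix.of fun i j : Fin m => ((b i).ascFactorial j.rev : R)).det =
      ∏ p : Fin m × Fin m with p.1 < p.2, ((b p.1 : R) - b p.2) := by
  have hasc (i j : Fin m) : ((b i).ascFactorial j : R) = (ascPochhammer R j).eval (b i : R) := by
    rw [← ascPochhammer_nat_eq_ascFactorial, ascPochhammer_eval_cast]
  have hvandermonde : (Matrix.vandermonde fun i => (b i : R)).submatrix id Fin.revPerm =
      Matrix.projVandermonde 1 fun i => (b i : R) := by
    ext i j
    simp [Matrix.vandermonde_apply, Matrix.projVandermonde_apply]
  calc _ = ((Matrix.of fun i j : Fin m => ((b i).ascFactorial j : R)).submatrix id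
          Fin.revPerm).det := rfl
    _ = ((Matrix.vandermonde fun i => (b i : R)).submatrix id Fin.revPerm).det := by
        simp only [Matrix.det_permute', hasc, Matrix.det_eval_matrixOfPolynomials_eq_det_vandermonde
          (fun i => (b i : R)) _ (fun j : Fin m => ascPochhammer_natDegree R j)
          fun j => monic_ascPochhammer R j]
    _ = _ := by rw [hvandermonde, det_projVandermonde_one_left]

variable (R m) in
/-- The Vandermonde product `∏_{i < j} (X i - X j)`, as the determinant with entries
`X i ^ (m - 1 - j)`. -/
noncomputable def vandermondePoly : MvPolynomial (Fin m) R :=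
  (Matrix.projVandermonde 1 X).det

variable (R m) in
/-- The monomial with exponent vector `(m - 1, …, 1, 0)`, the diagonal term of
`vandermondePoly R m`. -/
noncomputable def staircaseMonomial : MvPolynomial (Fin m) R :=
  ∏ i, X i ^ (i.rev : ℕ)

lemma vandermondePoly_eq_prod : vandermondePoly R m =
    ∏ p : Fin m × Fin m with p.1 < p.2, (X p.1 - X p.2) :=
  det_projVandermonde_one_left _

lemma vandermondePoly_eq_sum : vandermondePoly R m =
    ∑ π : Perm (Fin m), Perm.sign π • rename π (staircaseMonomial R m) := by
  simp [vandermondePoly, staircaseMonomial, Matrix.det_apply, Matrix.projVandermonde_apply]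

lemma rename_vandermondePoly (π : Perm (Fin m)) :
    rename π (vandermondePoly R m) = Perm.sign π • vandermondePoly R m := by
  have hdet : rename π (vandermondePoly R m) =
      ((Matrix.projVandermonde (1 : Fin m → MvPolynomial (Fin m) R) X).submatrix π id).det := by
    have hcomp := Matrix.projVandermonde_comp (v := (1 : Fin m → MvPolynomial (Fin m) R))
      (w := X) π
    rw [← hcomp, Pi.one_comp, det_projVandermonde_one_left, vandermondePoly_eq_prod, map_prod]
    simp
  rw [hdet, Matrix.det_permute, ← vandermondePoly, Units.smul_def, zsmul_eq_mul]

lemma prodOffDiag_eq_vandermondePoly_sq : prodOffDiag (Fin m) R =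
    (-1) ^ #{p : Fin m × Fin m | p.1 < p.2} * vandermondePoly R m ^ 2 := by
  have hswap : ∏ p : Fin m × Fin m with p.2 < p.1, (X p.1 - X p.2 : MvPolynomial (Fin m) R) =
      (-1) ^ #{p : Fin m × Fin m | p.1 < p.2} * vandermondePoly R m := by
    rw [vandermondePoly_eq_prod, ← prod_neg]
    exact prod_equiv (Equiv.prodComm _ _) (by simp) (by simp)
  have hsplit : (univ : Finset (Fin m)).offDiag =
      univ.filter (fun p => p.1 < p.2) ∪ univ.filter fun p => p.2 < p.1 := by
    ext p
    simp
  rw [prodOffDiag, hsplit, prod_union (disjoint_filter.2 fun p _ h => h.le.not_gt), hswap,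
    ← vandermondePoly_eq_prod]
  ring

lemma laguerreFunctional_mul_vandermondePoly_sq (α : ℕ) {p : MvPolynomial (Fin m) R}
    (hp : p.IsSymmetric) :
    laguerreFunctional (Fin m) R α (p * vandermondePoly R m ^ 2) = m.factorial *
      laguerreFunctional (Fin m) R α (p * (staircaseMonomial R m * vandermondePoly R m)) := by
  have hsum : p * vandermondePoly R m ^ 2 = ∑ π : Perm (Fin m),
      rename π (p * (staircaseMonomial R m * vandermondePoly R m)) := by
    simp only [map_mul, hp _, rename_vandermondePoly, mul_smul_comm, ← smul_mul_assoc]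
    rw [← mul_sum, ← sum_mul, ← vandermondePoly_eq_sum, sq]
  simp only [hsum, map_sum, laguerreFunctional_rename, sum_const, card_univ, Fintype.card_perm,
    Fintype.card_fin, nsmul_eq_mul]

lemma laguerreFunctional_prod_X_pow_mul_vandermondePoly [IsDomain R] (α : ℕ) (b : Fin m → ℕ) :
    laguerreFunctional (Fin m) R α ((∏ i, X i ^ b i) * vandermondePoly R m) =
      (∏ i, ((b i + α).factorial : R)) *
        ∏ p : Fin m × Fin m with p.1 < p.2, ((b p.1 : R) - b p.2) := by
  have hentry (i j : Fin m) : ((b i + j.rev + α).factorial : R) =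
      (b i + α).factorial * (b i + α + 1).ascFactorial j.rev := by
    rw [← Nat.cast_mul, Nat.factorial_mul_ascFactorial, add_right_comm]
  have hdet : laguerreFunctional (Fin m) R α ((∏ i, X i ^ b i) * vandermondePoly R m) =
      (Matrix.of fun i j : Fin m => ((b i + j.rev + α).factorial : R)).det := by
    rw [vandermondePoly, ← Matrix.det_transpose, Matrix.det_apply, mul_sum, map_sum,
      ← Matrix.det_transpose, Matrix.det_apply]
    refine sum_congr rfl fun π _ => ?_
    simp only [Matrix.transpose_apply, Matrix.projVandermonde_apply, Pi.one_apply, one_pow, one_mul,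
      mul_smul_comm, ← prod_mul_distrib, ← pow_add, Matrix.of_apply, Units.smul_def, map_zsmul,
      laguerreFunctional_prod_X_pow]
  simp only [hdet, hentry]
  have hcolumn := Matrix.det_mul_column (fun i => ((b i + α).factorial : R))
    (Matrix.of fun i j : Fin m => ((b i + α + 1).ascFactorial j.rev : R))
  rw [det_ascFactorial_rev] at hcolumn
  simpa using hcolumn

lemma laguerreFunctional_prod_X_pow_add_rev_mul_vandermondePoly [IsDomain R] (α : ℕ)
    (a : Fin m → ℕ) :
    laguerreFunctional (Fin m) R α ((∏ s, X s ^ (a s + s.rev : ℕ)) * vandermondePoly R m) =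
      (∏ s : Fin m, ((s.rev + α : ℕ).factorial : R)) *
        (∏ s : Fin m, ((m + α - s).ascFactorial (a s) : R)) *
        ∏ p : Fin m × Fin m with p.1 < p.2, ((a p.1 : R) - a p.2 + (p.2 : ℕ) - (p.1 : ℕ)) := by
  have hfactorial (s : Fin m) : ((a s + s.rev + α).factorial : R) =
      (s.rev + α : ℕ).factorial * (m + α - s).ascFactorial (a s) := by
    have hs : m + α - s = s.rev + α + 1 := by
      rw [Fin.val_rev]
      omega
    rw [hs, ← Nat.cast_mul, Nat.factorial_mul_ascFactorial, add_assoc, add_comm]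
  have hrev (s : Fin m) : ((s.rev : ℕ) : R) = m - (s + 1 : ℕ) := by
    rw [Fin.val_rev, Nat.cast_sub s.isLt]
  rw [laguerreFunctional_prod_X_pow_mul_vandermondePoly]
  simp only [hfactorial, prod_mul_distrib]
  congr 1
  refine prod_congr rfl fun p _ => ?_
  push_cast [hrev]
  ring

lemma laguerreFunctional_staircaseMonomial_mul_vandermondePoly [IsDomain R] (α : ℕ) :
    laguerreFunctional (Fin m) R α (staircaseMonomial R m * vandermondePoly R m) =
      (∏ s : Fin m, ((s.rev + α : ℕ).factorial : R)) *
        ∏ p : Fin m × Fin m with p.1 < p.2, (((p.2 : ℕ) : R) - (p.1 : ℕ)) := by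
  simpa [staircaseMonomial] using
    laguerreFunctional_prod_X_pow_add_rev_mul_vandermondePoly (R := R) α (0 : Fin m → ℕ)

end Vandermonde

section Evaluation

variable {R : Type*} [CommRing R] {m r : ℕ}

lemma laguerreFunctional_permPowerSum_mul_vandermondePoly_sq (α : ℕ) (ρ : Perm (Fin r)) :
    laguerreFunctional (Fin m) R α (permPowerSum (Fin m) R ρ * vandermondePoly R m ^ 2) =
      cycConvolution m (m + α) ρ * laguerreFunctional (Fin m) R α (vandermondePoly R m ^ 2) := by
  have hoffDiag := laguerreFunctional_permPowerSum_mul_prodOffDiag (ι := Fin m) (R := R) α ρ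
  rw [prodOffDiag_eq_vandermondePoly_sq, Fintype.card_fin] at hoffDiag
  rcases neg_one_pow_eq_or (MvPolynomial (Fin m) R) #{p : Fin m × Fin m | p.1 < p.2} with hε | hε
  · rwa [hε, one_mul] at hoffDiag
  · rwa [hε, neg_one_mul, mul_neg, map_neg, map_neg, mul_neg, neg_inj] at hoffDiag

variable [IsDomain R] [CharZero R]

lemma laguerreFunctional_permPowerSum_mul_staircaseMonomial_mul_vandermondePoly (α : ℕ)
    (ρ : Perm (Fin r)) :
    laguerreFunctional (Fin m) R α
        (permPowerSum (Fin m) R ρ * (staircaseMonomial R m * vandermondePoly R m)) =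
      cycConvolution m (m + α) ρ *
        laguerreFunctional (Fin m) R α (staircaseMonomial R m * vandermondePoly R m) := by
  have hρ := laguerreFunctional_mul_vandermondePoly_sq (m := m) (R := R) α
    (permPowerSum_isSymmetric ρ)
  have hone := laguerreFunctional_mul_vandermondePoly_sq (m := m) α (IsSymmetric.one (R := R))
  rw [one_mul, one_mul] at hone
  refine mul_left_cancel₀ (Nat.cast_ne_zero.2 m.factorial_ne_zero : (m.factorial : R) ≠ 0) ?_
  rw [← hρ, laguerreFunctional_permPowerSum_mul_vandermondePoly_sq, hone, mul_left_comm]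

lemma fSum_mul_laguerreFunctional_staircaseMonomial_mul_vandermondePoly (r lam α : ℕ) :
    (fSum r m (m + α) lam : R) *
        laguerreFunctional (Fin m) R α (staircaseMonomial R m * vandermondePoly R m) =
      ∑ a ∈ univ.piAntidiag r, Nat.multinomial univ a * ((∏ s, (lam.ascFactorial (a s) : R)) *
        laguerreFunctional (Fin m) R α
          ((∏ s, X s ^ (a s + s.rev : ℕ)) * vandermondePoly R m)) := by
  have hmonomial (a : Fin m → ℕ) :
      (∏ s, X s ^ a s) * (staircaseMonomial R m * vandermondePoly R m) =
        (∏ s, X s ^ (a s + s.rev : ℕ)) * vandermondePoly R m := by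
    simp only [staircaseMonomial, ← mul_assoc, ← prod_mul_distrib, ← pow_add]
  calc _ = laguerreFunctional (Fin m) R α ((∑ ρ : Perm (Fin r), lam ^ cyc ρ •
          permPowerSum (Fin m) R ρ) * (staircaseMonomial R m * vandermondePoly R m)) := by
        simp only [fSum_eq_sum_cycConvolution, Nat.cast_sum, sum_mul, map_sum, smul_mul_assoc,
          map_nsmul, laguerreFunctional_permPowerSum_mul_staircaseMonomial_mul_vandermondePoly]
        simp only [nsmul_eq_mul, Nat.cast_mul, mul_assoc]
    _ = _ := by
        simp only [sum_pow_cyc_smul_permPowerSum, sum_mul, map_sum, smul_mul_assoc, map_nsmul,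
          hmonomial]
        simp only [nsmul_eq_mul, Nat.cast_prod]

end Evaluation

/-- Coefficient of `x^r` in the evaluated series for `F(m,n,λ;x)`:
`f_r(m,n,λ)/r! = Σ_{a_0+⋯+a_{m-1}=r} ∏_{i<j} (a_i - a_j + j - i)/(j-i)
  · ∏_s λ^{(a_s)} (n-s)^{(a_s)} / a_s!`. -/
theorem fSum_div_factorial_eq (m n lam r : ℕ) (hm : 0 < m) (hn : 0 < n)
    (hlam : 0 < lam) (hmn : m ≤ n) :
    (fSum r m n lam : ℚ) / r.factorial =
      ∑ a ∈ Finset.Nat.antidiagonalTuple m r,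
        (∏ p ∈ Finset.univ.filter (fun p : Fin m × Fin m => p.1 < p.2),
            (((a p.1 : ℚ) - (a p.2 : ℚ) + ((p.2 : ℕ) : ℚ) - ((p.1 : ℕ) : ℚ)) /
              (((p.2 : ℕ) : ℚ) - ((p.1 : ℕ) : ℚ)))) *
        ∏ s : Fin m,
          ((Nat.ascFactorial lam (a s) : ℚ) *
            (Nat.ascFactorial (n - (s : ℕ)) (a s) : ℚ) / (a s).factorial) := by
  obtain ⟨α, rfl⟩ := Nat.exists_eq_add_of_le hmn
  have hsum := fSum_mul_laguerreFunctional_staircaseMonomial_mul_vandermondePoly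
    (R := ℚ) (m := m) r lam α
  have hdiff : ∏ p : Fin m × Fin m with p.1 < p.2, (((p.2 : ℕ) : ℚ) - (p.1 : ℕ)) ≠ 0 :=
    prod_ne_zero_iff.2 fun p hp => sub_ne_zero.2 <|
      Nat.cast_injective.ne <| Fin.val_ne_of_ne (mem_filter.1 hp).2.ne'
  have hrev : ∏ s : Fin m, ((s.rev + α : ℕ).factorial : ℚ) ≠ 0 :=
    prod_ne_zero_iff.2 fun s _ => Nat.cast_ne_zero.2 (Nat.factorial_ne_zero _)
  rw [laguerreFunctional_staircaseMonomial_mul_vandermondePoly,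
    ← eq_div_iff (mul_ne_zero hrev hdiff), piAntidiag_univ_fin_eq_antidiagonalTuple] at hsum
  rw [hsum, div_right_comm, sum_div, sum_div]
  refine sum_congr rfl fun a ha => ?_
  have hmultinomial : (Nat.multinomial univ a : ℚ) = r.factorial / ∏ s, ((a s).factorial : ℚ) := by
    rw [eq_div_iff (by positivity), mul_comm, ← Nat.mem_antidiagonalTuple.1 ha]
    exact_mod_cast Nat.multinomial_spec univ a
  rw [laguerreFunctional_prod_X_pow_add_rev_mul_vandermondePoly, hmultinomial]
  simp only [prod_div_distrib, prod_mul_distrib]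
  field_simp
end

section
/- Let t_r denote the number of transitive pairs (σ,τ) ∈ S_r × S_r, so that h_r = t_r/(r−1)! is the total number of rooted hypermaps with r darts. Then h_1 = 1, h_2 = 3, h_3 = 13, h_4 = 71 and h_5 = 461. -/
/-- A pair of permutations is transitive if the subgroup they generate acts
transitively on `Fin r`. -/
def IsTransitivePair {r : ℕ} (σ τ : Equiv.Perm (Fin r)) : Prop :=
  ∀ x y : Fin r, ∃ g ∈ Subgroup.closure ({σ, τ} : Set (Equiv.Perm (Fin r))), g x = y

/-- `t_r`: the number of transitive pairs `(σ,τ) ∈ S_r × S_r`. -/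
noncomputable def transPairs (r : ℕ) : ℕ :=
  Nat.card {p : Equiv.Perm (Fin r) × Equiv.Perm (Fin r) // IsTransitivePair p.1 p.2}

/-- `h_r = t_r/(r-1)!`: the total number of rooted hypermaps with `r` darts. -/
noncomputable def totalHypermaps (r : ℕ) : ℚ :=
  (transPairs r : ℚ) / (r - 1).factorial

/-!
A pair of permutations of a set is an action of the free group `F₂` on it. Splitting an action of
a finitely generated group `Γ` on `n + 1` points into the orbit of a base point and the rest gives
`|Hom(Γ, S_{n+1})| = ∑ₖ (n choose k) · t_{k+1}(Γ) · |Hom(Γ, S_{n-k})|`, where `t_k(Γ)` counts the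
transitive actions on `k` points. For `Γ = F₂`, dividing by `n!` turns this into
`∑ₖ h_{k+1} · (n - k)! = (n + 1) · (n + 1)!`, which determines the `h_r` successively.
-/

open Equiv Finset MulAction

section Actions

variable {Γ α β : Type*} [Group Γ]

theorem mem_orbit_range_iff (φ : Γ →* Perm α) (a x : α) :
    x ∈ orbit φ.range a ↔ ∃ γ, φ γ a = x := by
  simp [mem_orbit_iff, Subgroup.smul_def]

theorem isPretransitive_range_iff (φ : Γ →* Perm α) :
    IsPretransitive φ.range α ↔ ∀ x y, ∃ γ, φ γ x = y := by
  simp [isPretransitive_iff, Subgroup.smul_def]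

theorem apply_mem_orbit_range_iff (φ : Γ →* Perm α) (a : α) (γ : Γ) (x : α) :
    φ γ x ∈ orbit φ.range a ↔ x ∈ orbit φ.range a := by
  let g : φ.range := ⟨φ γ, γ, rfl⟩
  change g • x ∈ orbit φ.range a ↔ _
  rw [← orbit_eq_iff, orbit_smul, orbit_eq_iff]

theorem isPretransitive_range_permCongr_iff (e : α ≃ β) (φ : Γ →* Perm α) :
    IsPretransitive ((e.permCongrHom : Perm α →* Perm β).comp φ).range β ↔
      IsPretransitive φ.range α := by
  simp only [isPretransitive_range_iff, ← e.forall_congr_right]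
  simp

/-- The number `t_n(Γ)` of transitive actions of `Γ` on `n` labelled points, an action being encoded
as a homomorphism to the symmetric group. -/
noncomputable def numTransitiveActions (Γ : Type*) [Group Γ] (n : ℕ) : ℕ :=
  Nat.card {φ : Γ →* Perm (Fin n) // IsPretransitive φ.range (Fin n)}

theorem card_monoidHom_perm_eq [Finite α] :
    Nat.card (Γ →* Perm α) = Nat.card (Γ →* Perm (Fin (Nat.card α))) :=
  Nat.card_congr (Finite.equivFin α).permCongrHom.monoidHomCongrRightEquiv

theorem card_isPretransitive_range_eq [Finite α] :
    Nat.card {φ : Γ →* Perm α // IsPretransitive φ.range α} =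
      numTransitiveActions Γ (Nat.card α) :=
  Nat.card_congr <| (Finite.equivFin α).permCongrHom.monoidHomCongrRightEquiv.subtypeEquiv
    fun φ ↦ (isPretransitive_range_permCongr_iff _ φ).symm

theorem finite_monoidHom_of_fg [Group.FG Γ] (G : Type*) [Group G] [Finite G] :
    Finite (Γ →* G) := by
  obtain ⟨S, hS⟩ := Group.fg_def.mp ‹Group.FG Γ›
  refine Finite.of_injective (fun (φ : Γ →* G) (s : S) ↦ φ s) fun φ ψ h ↦ ?_
  exact MonoidHom.eq_of_eqOn_dense hS fun s hs ↦ congrFun h ⟨s, hs⟩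

end Actions

section Splitting

variable {Γ α : Type*} [Group Γ] (p : α → Prop) [DecidablePred p]

/-- The action on `α` obtained from actions on the part where `p` holds and on its complement. -/
def glueActions (ψ : Γ →* Perm {x // p x}) (χ : Γ →* Perm {x // ¬p x}) : Γ →* Perm α :=
  (Perm.subtypeCongrHom p).comp (ψ.prod χ)

variable {p}

theorem glueActions_apply_coe (ψ : Γ →* Perm {x // p x}) (χ : Γ →* Perm {x // ¬p x})
    (γ : Γ) (x : {x // p x}) : glueActions p ψ χ γ x = ψ γ x := by
  simp [glueActions]

theorem glueActions_inj {ψ ψ' : Γ →* Perm {x // p x}} {χ χ' : Γ →* Perm {x // ¬p x}} :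
    glueActions p ψ χ = glueActions p ψ' χ' ↔ ψ = ψ' ∧ χ = χ' := by
  rw [glueActions, glueActions, MonoidHom.cancel_left (Perm.subtypeCongrHom_injective p)]
  simp [MonoidHom.ext_iff, forall_and]

theorem exists_glueActions_eq (φ : Γ →* Perm α) (hφ : ∀ γ x, p (φ γ x) ↔ p x) :
    ∃ ψ χ, glueActions p ψ χ = φ := by
  let ψ : Γ →* Perm {x // p x} := MonoidHom.mk' (fun γ ↦ (φ γ).subtypePerm (hφ γ))
    fun γ δ ↦ by simp [Perm.subtypePerm_mul]
  let χ : Γ →* Perm {x // ¬p x} := MonoidHom.mk'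
    (fun γ ↦ (φ γ).subtypePerm fun x ↦ not_congr (hφ γ x))
    fun γ δ ↦ by simp [Perm.subtypePerm_mul]
  refine ⟨ψ, χ, ?_⟩
  ext γ x
  by_cases hx : p x
  · exact Perm.subtypeCongr.left_apply _ _ hx
  · exact Perm.subtypeCongr.right_apply _ _ hx

theorem orbit_range_glueActions (ψ : Γ →* Perm {x // p x}) (χ : Γ →* Perm {x // ¬p x})
    (a : {x // p x}) :
    orbit (glueActions p ψ χ).range (a : α) = Subtype.val '' orbit ψ.range a := by
  ext x
  simp only [mem_orbit_range_iff, glueActions_apply_coe, Set.mem_image]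
  grind

theorem orbit_range_glueActions_eq_iff (ψ : Γ →* Perm {x // p x}) (χ : Γ →* Perm {x // ¬p x})
    (a : {x // p x}) :
    orbit (glueActions p ψ χ).range (a : α) = {x | p x} ↔ IsPretransitive ψ.range {x // p x} := by
  rw [orbit_range_glueActions, isPretransitive_iff_orbit_eq_univ a, ← Subtype.range_coe_subtype,
    ← Set.image_univ, Subtype.val_injective.image_injective.eq_iff]

/-- Actions in which the orbit of `a` is `{x | p x}` are pairs of a transitive action on this set
and an arbitrary action on its complement. -/
noncomputable def orbitEqEquiv (a : {x // p x}) :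
    {ψ : Γ →* Perm {x // p x} // IsPretransitive ψ.range {x // p x}} × (Γ →* Perm {x // ¬p x}) ≃
      {φ : Γ →* Perm α // orbit φ.range (a : α) = {x | p x}} :=
  Equiv.ofBijective
    (fun q ↦ ⟨glueActions p q.1 q.2, (orbit_range_glueActions_eq_iff _ _ a).mpr q.1.2⟩) <| by
      constructor
      · rintro ⟨⟨ψ, _⟩, χ⟩ ⟨⟨ψ', _⟩, χ'⟩ h
        simpa [glueActions_inj] using h
      · rintro ⟨φ, hφ⟩
        have hp (γ : Γ) (x : α) : p (φ γ x) ↔ p x := by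
          simpa [hφ] using apply_mem_orbit_range_iff φ a γ x
        obtain ⟨ψ, χ, rfl⟩ := exists_glueActions_eq φ hp
        exact ⟨⟨⟨ψ, (orbit_range_glueActions_eq_iff ψ χ a).mp hφ⟩, χ⟩, rfl⟩

end Splitting

section Recurrence

variable {Γ : Type*} [Group Γ]

theorem card_orbit_range_eq {α : Type*} [Fintype α] (s : Finset α) {a : α} (ha : a ∈ s) :
    Nat.card {φ : Γ →* Perm α // orbit φ.range a = s} =
      numTransitiveActions Γ #s * Nat.card (Γ →* Perm (Fin (Fintype.card α - #s))) := by
  classical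
  have hcompl : Nat.card {x // x ∉ s} = Fintype.card α - #s := by
    rw [Nat.card_eq_fintype_card, Fintype.card_subtype_compl, Fintype.card_coe]
  have hcard := Nat.card_congr (orbitEqEquiv (Γ := Γ) (p := (· ∈ s)) ⟨a, ha⟩)
  rw [Nat.card_prod, card_isPretransitive_range_eq, card_monoidHom_perm_eq, hcompl] at hcard
  simpa using hcard.symm

theorem card_monoidHom_perm_eq_sum_orbit [Group.FG Γ] {α : Type*} [Fintype α] [DecidableEq α]
    (a : α) :
    Nat.card (Γ →* Perm α) = ∑ t ∈ (univ.erase a).powerset,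
      Nat.card {φ : Γ →* Perm α // orbit φ.range a = (insert a t : Finset α)} := by
  classical
  have := finite_monoidHom_of_fg (Γ := Γ) (Perm α)
  have := Fintype.ofFinite (Γ →* Perm α)
  rw [Nat.card_eq_fintype_card, ← card_univ,
    card_eq_sum_card_fiberwise (f := fun φ ↦ (orbit φ.range a).toFinset.erase a)
      (t := (univ.erase a).powerset) fun φ _ ↦ by simp]
  refine sum_congr rfl fun t ht ↦ ?_
  have ha : a ∉ t := notMem_mono (mem_powerset.mp ht) (notMem_erase a univ)
  rw [Nat.card_eq_fintype_card, Fintype.card_subtype]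
  congr! 2 with φ
  rw [erase_eq_iff_eq_insert (by simp) ha, ← coe_inj, Set.coe_toFinset]

theorem card_monoidHom_perm_succ [Group.FG Γ] (n : ℕ) :
    Nat.card (Γ →* Perm (Fin (n + 1))) = ∑ k ∈ range (n + 1),
      n.choose k * (numTransitiveActions Γ (k + 1) * Nat.card (Γ →* Perm (Fin (n - k)))) := by
  calc
    _ = ∑ t ∈ (univ.erase (0 : Fin (n + 1))).powerset, numTransitiveActions Γ (#t + 1) *
          Nat.card (Γ →* Perm (Fin (n - #t))) := by
      rw [card_monoidHom_perm_eq_sum_orbit 0]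
      refine sum_congr rfl fun t ht ↦ ?_
      have h0 : 0 ∉ t := notMem_mono (mem_powerset.mp ht) (notMem_erase 0 univ)
      rw [card_orbit_range_eq _ (mem_insert_self 0 t), card_insert_of_notMem h0, Fintype.card_fin,
        Nat.add_sub_add_right]
    _ = _ := by
      rw [sum_powerset_apply_card fun k ↦ numTransitiveActions Γ (k + 1) *
        Nat.card (Γ →* Perm (Fin (n - k)))]
      simp

end Recurrence

theorem card_freeGroup_monoidHom_perm (ι : Type*) [Finite ι] (n : ℕ) :
    Nat.card (FreeGroup ι →* Perm (Fin n)) = n.factorial ^ Nat.card ι := by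
  rw [← Nat.card_congr FreeGroup.lift, Nat.card_fun, Nat.card_perm, Nat.card_fin]

theorem isTransitivePair_iff {r : ℕ} (σ τ : Perm (Fin r)) :
    IsTransitivePair σ τ ↔ IsPretransitive (FreeGroup.lift ![σ, τ]).range (Fin r) := by
  rw [FreeGroup.range_lift_eq_closure, Matrix.range_cons_cons_empty, isPretransitive_iff]
  simp [IsTransitivePair, Subgroup.smul_def]

theorem transPairs_eq_numTransitiveActions (r : ℕ) :
    transPairs r = numTransitiveActions (FreeGroup (Fin 2)) r :=
  Nat.card_congr <| ((finTwoArrowEquiv _).symm.trans FreeGroup.lift).subtypeEquiv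
    fun p ↦ isTransitivePair_iff p.1 p.2

theorem sum_choose_mul_transPairs (n : ℕ) :
    ∑ k ∈ range (n + 1), n.choose k * (transPairs (k + 1) * (n - k).factorial ^ 2) =
      (n + 1).factorial ^ 2 := by
  simpa [card_freeGroup_monoidHom_perm, transPairs_eq_numTransitiveActions] using
    (card_monoidHom_perm_succ (Γ := FreeGroup (Fin 2)) n).symm

theorem sum_totalHypermaps_mul_factorial (n : ℕ) :
    ∑ k ∈ range (n + 1), totalHypermaps (k + 1) * (n - k).factorial =
      (n + 1) * (n + 1).factorial := by
  have hn : (n.factorial : ℚ) ≠ 0 := by positivity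
  refine mul_left_cancel₀ hn ?_
  calc
    _ = ∑ k ∈ range (n + 1),
          ((n.choose k * (transPairs (k + 1) * (n - k).factorial ^ 2) : ℕ) : ℚ) := by
      rw [mul_sum]
      refine sum_congr rfl fun k hk ↦ ?_
      rw [← Nat.choose_mul_factorial_mul_factorial (Nat.le_of_lt_succ (mem_range.mp hk)),
        totalHypermaps, Nat.add_sub_cancel]
      push_cast
      field_simp
    _ = ((n + 1).factorial : ℚ) ^ 2 := by
      exact_mod_cast sum_choose_mul_transPairs n
    _ = _ := by
      rw [Nat.factorial_succ]
      push_cast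
      ring

theorem totalHypermaps_succ (n : ℕ) :
    totalHypermaps (n + 1) = (n + 1) * (n + 1).factorial -
      ∑ k ∈ range n, totalHypermaps (k + 1) * (n - k).factorial := by
  rw [← sum_totalHypermaps_mul_factorial, sum_range_succ]
  simp

/-- The total numbers of rooted hypermaps with 1, 2, 3, 4 and 5 darts are
1, 3, 13, 71 and 461 respectively. -/
theorem totalHypermaps_values :
    totalHypermaps 1 = 1 ∧ totalHypermaps 2 = 3 ∧ totalHypermaps 3 = 13 ∧
      totalHypermaps 4 = 71 ∧ totalHypermaps 5 = 461 := by
  have h₁ : totalHypermaps 1 = 1 := by norm_num [totalHypermaps_succ 0]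
  have h₂ : totalHypermaps 2 = 3 := by
    norm_num [totalHypermaps_succ 1, sum_range_succ, Nat.factorial, h₁]
  have h₃ : totalHypermaps 3 = 13 := by
    norm_num [totalHypermaps_succ 2, sum_range_succ, Nat.factorial, h₁, h₂]
  have h₄ : totalHypermaps 4 = 71 := by
    norm_num [totalHypermaps_succ 3, sum_range_succ, Nat.factorial, h₁, h₂, h₃]
  have h₅ : totalHypermaps 5 = 461 := by
    norm_num [totalHypermaps_succ 4, sum_range_succ, Nat.factorial, h₁, h₂, h₃, h₄]
  exact ⟨h₁, h₂, h₃, h₄, h₅⟩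
end
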